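/- arXiv:math/0311377 — 2 statements merged into one kernel-verified Lean document; each statement's English description precedes it below -/
import Mathlib

section
/- Let f : B → A be a homomorphism of commutative rings, and assume A is flat as a B-module. Then for every comodule (M, ρ) over the canonical coring A ⊗_B A, the counit map ζ_M : M^co ⊗_B A → M, ζ_M(m ⊗ a) = m·a, is bijective. -/
open TensorProduct

universe u

noncomputable def unitMap (B A : Type u) [CommRing B] [CommRing A] [Algebra B A]
    (N : Type u) [AddCommGroup N] [Module B N] : N →ₗ[B] N ⊗[B] A :=
  (TensorProduct.mk B N A).flip 1

/-- The action map `M ⊗_B A → M`, `m ⊗ a ↦ m · a`. -/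
noncomputable def actionMap (B A : Type u) [CommRing B] [CommRing A] [Algebra B A]
    (M : Type u) [AddCommGroup M] [Module B M] [Module A M] [IsScalarTower B A M] :
    M ⊗[B] A →ₗ[B] M :=
  TensorProduct.lift (LinearMap.mk₂ B (fun m a => a • m)
    (fun m m' a => smul_add a m m')
    (fun b m a => smul_comm a b m)
    (fun m a a' => add_smul a a' m)
    (fun b m a => smul_assoc b a m))

/-- `(M, ρ)` is a comodule over the canonical coring `A ⊗_B A`. -/
def IsCanComodule (B A : Type u) [CommRing B] [CommRing A] [Algebra B A]
    (M : Type u) [AddCommGroup M] [Module B M] [Module A M] [IsScalarTower B A M]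
    (ρ : M →ₗ[B] M ⊗[B] A) : Prop :=
  (∀ (a : A) (m : M),
      ρ (a • m) = LinearMap.lTensor M (LinearMap.mulLeft B a) (ρ m)) ∧
  (∀ m : M, LinearMap.rTensor A ρ (ρ m) = LinearMap.rTensor A (unitMap B A M) (ρ m)) ∧
  (∀ m : M, actionMap B A M (ρ m) = m)

/-- The coinvariants `M^co = {m : ρ m = m ⊗ 1}` as a `B`-submodule. -/
noncomputable def coinv (B A : Type u) [CommRing B] [CommRing A] [Algebra B A]
    (M : Type u) [AddCommGroup M] [Module B M] [Module A M] [IsScalarTower B A M]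
    (ρ : M →ₗ[B] M ⊗[B] A) : Submodule B M where
  carrier := {m | ρ m = m ⊗ₜ[B] 1}
  add_mem' := by
    intro x y hx hy
    simp only [Set.mem_setOf_eq] at *
    rw [map_add, hx, hy, add_tmul]
  zero_mem' := by simp
  smul_mem' := by
    intro b m hm
    simp only [Set.mem_setOf_eq] at *
    rw [map_smul, hm, smul_tmul']

/-- The counit map `ζ_M : M^co ⊗_B A → M`, `m ⊗ a ↦ m · a`. -/
noncomputable def counitMap (B A : Type u) [CommRing B] [CommRing A] [Algebra B A]
    (M : Type u) [AddCommGroup M] [Module B M] [Module A M] [IsScalarTower B A M]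
    (ρ : M →ₗ[B] M ⊗[B] A) : (coinv B A M ρ) ⊗[B] A →ₗ[B] M :=
  actionMap B A M ∘ₗ LinearMap.rTensor A (coinv B A M ρ).subtype

/-!
The coinvariants are the equalizer of `ρ` and `m ↦ m ⊗ 1`, and flatness makes `- ⊗[B] A` preserve
this equalizer: `M^co ⊗[B] A` is identified with the equalizer of `ρ ⊗ A` and `(m ↦ m ⊗ 1) ⊗ A`
inside `M ⊗[B] A`, and `ζ_M` with the restriction of the action map to it. That restriction is
inverse to `ρ`: coassociativity says that `ρ` takes values in the equalizer and the counit condition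
that the action map retracts `ρ`. Conversely, if `∑ ρ m ⊗ a = ∑ m ⊗ 1 ⊗ a`, then multiplying the
last two factors gives, by `A`-linearity of `ρ`, `ρ (∑ m · a) = ∑ m ⊗ a`.
-/

lemma eqLocus_rTensor_eq_range {R : Type*} [CommRing R] (A : Type*) [AddCommGroup A] [Module R A]
    [Module.Flat R A] {N P : Type*} [AddCommGroup N] [AddCommGroup P] [Module R N] [Module R P]
    (f g : N →ₗ[R] P) :
    LinearMap.eqLocus (f.rTensor A) (g.rTensor A) =
      LinearMap.range ((LinearMap.eqLocus f g).subtype.rTensor A) := by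
  rw [LinearMap.eqLocus_eq_ker_sub, LinearMap.eqLocus_eq_ker_sub, ← LinearMap.rTensor_sub,
    ← LinearMap.exact_iff]
  exact Module.Flat.rTensor_exact A (f - g).exact_subtype_ker_map

/-- The action map `(N ⊗ A) ⊗ A → N ⊗ A`, `n ⊗ c ⊗ a ↦ n ⊗ a * c`, of the induced module `N ⊗ A`.
It is not an instance of `actionMap`: when `N` is itself an `A`-module, Mathlib's `A`-module
structure on `N ⊗ A` is the one on the first factor. -/
noncomputable def inducedActionMap (B A N : Type*) [CommSemiring B] [Semiring A] [Algebra B A]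
    [AddCommMonoid N] [Module B N] : (N ⊗[B] A) ⊗[B] A →ₗ[B] N ⊗[B] A :=
  TensorProduct.lift (LinearMap.lTensorHom N ∘ₗ LinearMap.mul B A).flip

@[simp]
lemma inducedActionMap_tmul {B A N : Type*} [CommSemiring B] [Semiring A] [Algebra B A]
    [AddCommMonoid N] [Module B N] (y : N ⊗[B] A) (a : A) :
    inducedActionMap B A N (y ⊗ₜ a) = (LinearMap.mulLeft B a).lTensor N y :=
  rfl

section CanonicalCoring

variable {B A : Type u} [CommRing B] [CommRing A] [Algebra B A]

@[simp]
lemma unitMap_apply {N : Type u} [AddCommGroup N] [Module B N] (n : N) :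
    unitMap B A N n = n ⊗ₜ 1 :=
  rfl

lemma inducedActionMap_comp_rTensor_unitMap (N : Type u) [AddCommGroup N] [Module B N] :
    inducedActionMap B A N ∘ₗ (unitMap B A N).rTensor A = LinearMap.id := by
  ext n a
  simp

variable {M : Type u} [AddCommGroup M] [Module B M] [Module A M] [IsScalarTower B A M]

@[simp]
lemma actionMap_tmul (m : M) (a : A) : actionMap B A M (m ⊗ₜ a) = a • m :=
  rfl

lemma inducedActionMap_comp_rTensor_of_map_smul {N : Type*} [AddCommMonoid N] [Module B N]
    {φ : M →ₗ[B] N ⊗[B] A}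
    (hφ : ∀ (a : A) (m : M), φ (a • m) = (LinearMap.mulLeft B a).lTensor N (φ m)) :
    inducedActionMap B A N ∘ₗ φ.rTensor A = φ ∘ₗ actionMap B A M := by
  ext m a
  simp [hφ]

lemma apply_actionMap_of_mem_eqLocus {ρ : M →ₗ[B] M ⊗[B] A}
    (hρ : ∀ (a : A) (m : M), ρ (a • m) = (LinearMap.mulLeft B a).lTensor M (ρ m))
    {x : M ⊗[B] A} (hx : x ∈ LinearMap.eqLocus (ρ.rTensor A) ((unitMap B A M).rTensor A)) :
    ρ (actionMap B A M x) = x :=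
  calc ρ (actionMap B A M x)
      = inducedActionMap B A M (ρ.rTensor A x) :=
        (LinearMap.congr_fun (inducedActionMap_comp_rTensor_of_map_smul hρ) x).symm
    _ = inducedActionMap B A M ((unitMap B A M).rTensor A x) := congrArg _ hx
    _ = x := LinearMap.congr_fun (inducedActionMap_comp_rTensor_unitMap M) x

lemma IsCanComodule.bijOn_actionMap {ρ : M →ₗ[B] M ⊗[B] A} (hρ : IsCanComodule B A M ρ) :
    Set.BijOn (actionMap B A M)
      (LinearMap.eqLocus (ρ.rTensor A) ((unitMap B A M).rTensor A)) Set.univ := by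
  obtain ⟨h_smul, h_coassoc, h_counit⟩ := hρ
  have h_inv : Set.InvOn ρ (actionMap B A M)
      (LinearMap.eqLocus (ρ.rTensor A) ((unitMap B A M).rTensor A)) Set.univ :=
    ⟨fun _ hx ↦ apply_actionMap_of_mem_eqLocus h_smul hx, fun m _ ↦ h_counit m⟩
  exact h_inv.bijOn (Set.mapsTo_univ _ _) fun m _ ↦ h_coassoc m

lemma coinv_eq_eqLocus (ρ : M →ₗ[B] M ⊗[B] A) :
    coinv B A M ρ = LinearMap.eqLocus ρ (unitMap B A M) :=
  rfl

lemma bijOn_rTensor_subtype_coinv [Module.Flat B A] (ρ : M →ₗ[B] M ⊗[B] A) :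
    Set.BijOn ((coinv B A M ρ).subtype.rTensor A) Set.univ
      (LinearMap.eqLocus (ρ.rTensor A) ((unitMap B A M).rTensor A)) := by
  have h_inj : Function.Injective ((coinv B A M ρ).subtype.rTensor A) :=
    Module.Flat.rTensor_preserves_injective_linearMap _ (Submodule.subtype_injective _)
  rw [eqLocus_rTensor_eq_range, ← coinv_eq_eqLocus, LinearMap.coe_range, ← Set.image_univ]
  exact h_inj.bijOn_image

end CanonicalCoring

/-- If `A` is flat as a `B`-module, then for every comodule `(M, ρ)` over the canonical
coring `A ⊗_B A` the counit map `ζ_M : M^co ⊗_B A → M` is bijective. -/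
theorem counit_bijective_of_flat
    (B A : Type u) [CommRing B] [CommRing A] [Algebra B A] [Module.Flat B A]
    (M : Type u) [AddCommGroup M] [Module B M] [Module A M] [IsScalarTower B A M]
    (ρ : M →ₗ[B] M ⊗[B] A) (hρ : IsCanComodule B A M ρ) :
    Function.Bijective (counitMap B A M ρ) := by
  have h_comp := hρ.bijOn_actionMap.comp (bijOn_rTensor_subtype_coinv ρ)
  exact Set.bijOn_univ.mp h_comp
end

section
/- Let f : B → A be a homomorphism of commutative rings, and assume f is pure as a morphism of B-modules. Then for every comodule (M, ρ) over the canonical coring A ⊗_B A, the counit map ζ_M : M^co ⊗_B A → M, ζ_M(m ⊗ a) = m·a, is bijective. -/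
open TensorProduct

universe u

/-!
Write `X⁺ = Hom(X, ℚ/ℤ)`. Extending evaluation at `1` along `B⁺ → B⁺ ⊗ A`, which is injective by
purity, produces a section `N⁺ → (N ⊗ A)⁺` of the dual of `n ↦ n ⊗ 1`, natural in `N`. For a
comodule `(M, ρ)` and `d m = m ⊗ 1 - ρ m`, naturality and coassociativity split the dual of
`0 → M^co → M --d--> M ⊗ A`. A splitting of the dual survives `P ⊗ -`, because
`(P ⊗ X)⁺ = Hom(P, X⁺)`, so the sequence stays exact after `- ⊗ A`. Now `ρ` is injective by the
counit condition, `ρ ∘ ζ` is the injective map `M^co ⊗ A → M ⊗ A`, and its range, the kernel of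
`d ⊗ A`, contains the range of `ρ` by coassociativity; hence `ζ` is bijective.
-/

section Exactness

open CharacterModule

variable {R X Y Z P : Type*} [CommRing R] [AddCommGroup X] [Module R X] [AddCommGroup Y]
  [Module R Y] [AddCommGroup Z] [Module R Z] [AddCommGroup P] [Module R P]

lemma exact_of_comp_add_comp_eq_id {f : X →ₗ[R] Y} {g : Y →ₗ[R] Z} {s : Y →ₗ[R] X} {t : Z →ₗ[R] Y}
    (hgf : g ∘ₗ f = 0) (hst : t ∘ₗ g + f ∘ₗ s = LinearMap.id) : Function.Exact f g := by
  refine LinearMap.exact_of_comp_eq_zero_of_ker_le_range hgf fun y hy ↦ ⟨s y, ?_⟩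
  have hy' : t (g y) + f (s y) = y := LinearMap.congr_fun hst y
  rwa [LinearMap.mem_ker.1 hy, map_zero, zero_add] at hy'

lemma exists_comp_add_comp_eq_id_of_exact {f : X →ₗ[R] Y} {g : Y →ₗ[R] Z}
    (hfg : Function.Exact f g) (hg : Function.Surjective g) {s : Y →ₗ[R] X}
    (hs : f ∘ₗ s ∘ₗ f = f) : ∃ t : Z →ₗ[R] Y, t ∘ₗ g + f ∘ₗ s = LinearMap.id := by
  have hker : LinearMap.range f ≤ LinearMap.ker (LinearMap.id - f ∘ₗ s) := by
    rintro _ ⟨x, rfl⟩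
    exact sub_eq_zero.2 (LinearMap.congr_fun hs x).symm
  refine ⟨(LinearMap.range f).liftQ _ hker ∘ₗ (hfg.linearEquivOfSurjective hg).symm, ?_⟩
  ext y
  simp

lemma dual_sub (f g : X →ₗ[R] Y) : dual (f - g) = dual f - dual g :=
  LinearMap.ext fun χ ↦ DFunLike.ext _ _ fun x ↦ map_sub χ (f x) (g x)

lemma exact_dual_of_exact {f : X →ₗ[R] Y} {g : Y →ₗ[R] Z} (hfg : Function.Exact f g) :
    Function.Exact (dual g) (dual f) := by
  refine LinearMap.exact_of_comp_eq_zero_of_ker_le_range ?_ fun χ hχ ↦ ?_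
  · rw [← dual_comp, hfg.linearMap_comp_eq_zero, dual_zero]
  · have hker : (LinearMap.ker g).toAddSubgroup ≤
        AddMonoidHom.ker (χ : Y →+ AddCircle (1 : ℚ)) := by
      intro y hy
      obtain ⟨x, rfl⟩ := (hfg y).1 hy
      exact DFunLike.congr_fun (LinearMap.mem_ker.1 hχ) x
    have hinj : Function.Injective ((LinearMap.ker g).liftQ g le_rfl) :=
      LinearMap.ker_eq_bot.1 (Submodule.ker_liftQ_eq_bot' _ g rfl)
    obtain ⟨ω, hω⟩ := dual_surjective_of_injective _ hinj (QuotientAddGroup.lift _ _ hker)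
    exact ⟨ω, DFunLike.ext _ _ fun y ↦ DFunLike.congr_fun hω (Submodule.Quotient.mk y)⟩

lemma exact_of_exact_dual {f : X →ₗ[R] Y} {g : Y →ₗ[R] Z}
    (h : Function.Exact (dual g) (dual f)) : Function.Exact f g := by
  refine LinearMap.exact_of_comp_eq_zero_of_ker_le_range ?_ fun y hy ↦ ?_
  · ext x
    exact eq_zero_of_character_apply fun ω ↦ DFunLike.congr_fun (h.apply_apply_eq_zero ω) x
  · refine (Submodule.Quotient.mk_eq_zero _).1 (eq_zero_of_character_apply fun χ ↦ ?_)
    have hχ : dual f (dual (LinearMap.range f).mkQ χ) = 0 := by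
      rw [← LinearMap.comp_apply, ← dual_comp, LinearMap.range_mkQ_comp, dual_zero,
        LinearMap.zero_apply]
    obtain ⟨ω, hω⟩ := (h _).1 hχ
    calc χ (Submodule.Quotient.mk y) = ω (g y) := (DFunLike.congr_fun hω y).symm
      _ = 0 := by rw [LinearMap.mem_ker.1 hy, map_zero]

variable (P) in
/-- The map `(P ⊗ X)⁺ → (P ⊗ Y)⁺` induced by a map `X⁺ → Y⁺` of character modules, under the
identification of `(P ⊗ X)⁺` with `Hom(P, X⁺)`. It extends `dual g ↦ dual (g.lTensor P)` to maps
which are not themselves duals. -/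
noncomputable def lTensorDual (s : CharacterModule X →ₗ[R] CharacterModule Y) :
    CharacterModule (P ⊗[R] X) →ₗ[R] CharacterModule (P ⊗[R] Y) :=
  homEquiv.toLinearMap ∘ₗ s.compRight R ∘ₗ homEquiv.symm.toLinearMap

lemma characterModule_tensor_ext {c c' : CharacterModule (X ⊗[R] Y)}
    (h : ∀ x y, c (x ⊗ₜ y) = c' (x ⊗ₜ y)) : c = c' :=
  homEquiv.symm.injective <| LinearMap.ext fun x ↦ DFunLike.ext _ _ (h x)

lemma lTensorDual_dual (g : X →ₗ[R] Y) : lTensorDual P (dual g) = dual (g.lTensor P) :=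
  LinearMap.ext fun _ ↦ characterModule_tensor_ext fun _ _ ↦ rfl

lemma lTensorDual_id :
    lTensorDual P (LinearMap.id : CharacterModule X →ₗ[R] CharacterModule X) = LinearMap.id :=
  LinearMap.ext fun _ ↦ characterModule_tensor_ext fun _ _ ↦ rfl

lemma lTensorDual_comp (s : CharacterModule Y →ₗ[R] CharacterModule Z)
    (t : CharacterModule X →ₗ[R] CharacterModule Y) :
    lTensorDual P (s ∘ₗ t) = lTensorDual P s ∘ₗ lTensorDual P t :=
  LinearMap.ext fun _ ↦ characterModule_tensor_ext fun _ _ ↦ rfl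

lemma lTensorDual_add (s t : CharacterModule X →ₗ[R] CharacterModule Y) :
    lTensorDual P (s + t) = lTensorDual P s + lTensorDual P t :=
  LinearMap.ext fun _ ↦ characterModule_tensor_ext fun _ _ ↦ rfl

variable {d : Y →ₗ[R] Z} {i : X →ₗ[R] Y} {s : CharacterModule Y →ₗ[R] CharacterModule Z}
  {t : CharacterModule X →ₗ[R] CharacterModule Y}

lemma exact_lTensor_of_dual_comp_add_comp_eq_id (hid : d ∘ₗ i = 0)
    (hst : t ∘ₗ dual i + dual d ∘ₗ s = LinearMap.id) :
    Function.Exact (i.lTensor P) (d.lTensor P) := by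
  apply exact_of_exact_dual
  refine exact_of_comp_add_comp_eq_id (s := lTensorDual P s) (t := lTensorDual P t) ?_ ?_
  · rw [← dual_comp, ← LinearMap.lTensor_comp, hid, LinearMap.lTensor_zero, dual_zero]
  · rw [← lTensorDual_dual, ← lTensorDual_dual, ← lTensorDual_comp, ← lTensorDual_comp,
      ← lTensorDual_add, hst, lTensorDual_id]

lemma lTensor_injective_of_dual_comp_eq_id (ht : dual i ∘ₗ t = LinearMap.id) :
    Function.Injective (i.lTensor P) := by
  have ht' : lTensorDual P (dual i) ∘ₗ lTensorDual P t = LinearMap.id := by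
    rw [← lTensorDual_comp, ht, lTensorDual_id]
  rw [← dual_surjective_iff_injective, ← lTensorDual_dual]
  exact LinearMap.surjective_of_comp_eq_id _ _ ht'

variable (P) in
lemma rTensor_injective_and_exact_of_dual_comp_comp_eq (hi : Function.Injective i)
    (hid : Function.Exact i d) (hs : dual d ∘ₗ s ∘ₗ dual d = dual d) :
    Function.Injective (i.rTensor P) ∧ Function.Exact (i.rTensor P) (d.rTensor P) := by
  have hi' : Function.Surjective (dual i) := dual_surjective_of_injective i hi
  have hdual : Function.Exact (dual d) (dual i) := exact_dual_of_exact hid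
  obtain ⟨t, hst⟩ := exists_comp_add_comp_eq_id_of_exact hdual hi' hs
  have ht : dual i ∘ₗ t = LinearMap.id := by
    rw [← LinearMap.cancel_right hi', LinearMap.comp_assoc, eq_sub_of_add_eq hst,
      LinearMap.comp_sub, ← LinearMap.comp_assoc, hdual.linearMap_comp_eq_zero,
      LinearMap.zero_comp, sub_zero, LinearMap.comp_id, LinearMap.id_comp]
  exact ⟨(LinearMap.lTensor_inj_iff_rTensor_inj _ _).1 (lTensor_injective_of_dual_comp_eq_id ht),
    (LinearMap.rTensor_exact_iff_lTensor_exact P).2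
      (exact_lTensor_of_dual_comp_add_comp_eq_id hid.linearMap_comp_eq_zero hst)⟩

end Exactness

section NaturalSection

open CharacterModule

/-- The map `N⁺ → Hom(N, R⁺)` sending `ψ` to `n ↦ (r ↦ ψ (r • n))`. It presents every character of
`N` as a linear map into the fixed module `R⁺`. -/
noncomputable def characterToHom (R N : Type*) [CommRing R] [AddCommGroup N] [Module R N] :
    CharacterModule N →ₗ[R] N →ₗ[R] CharacterModule R :=
  curry ∘ₗ dual (TensorProduct.rid R N).toLinearMap

variable {R N N' A : Type*} [CommRing R] [AddCommGroup N] [Module R N] [AddCommGroup N']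
  [Module R N'] [AddCommGroup A] [Module R A]

lemma characterToHom_apply (ψ : CharacterModule N) (n : N) (r : R) :
    characterToHom R N ψ n r = ψ (r • n) :=
  congrArg ψ (TensorProduct.rid_tmul n r)

lemma characterToHom_dual (g : N →ₗ[R] N') (ψ : CharacterModule N') :
    characterToHom R N (dual g ψ) = characterToHom R N' ψ ∘ₗ g := by
  ext n r
  rw [characterToHom_apply, LinearMap.comp_apply, characterToHom_apply, ← map_smul]
  rfl

variable (N) in
/-- The map `N⁺ → (N ⊗ A)⁺` induced by a character `E` of `R⁺ ⊗ A`: it sends `ψ` to the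
composition of `E` with `characterToHom R N ψ ⊗ A`. When `A` is an algebra and
`E (χ ⊗ 1) = χ 1`, it is a section of the dual of `n ↦ n ⊗ 1`. -/
noncomputable def dualSection (E : CharacterModule (CharacterModule R ⊗[R] A)) :
    CharacterModule N →ₗ[R] CharacterModule (N ⊗[R] A) :=
  uncurry ∘ₗ (curry E).compRight R ∘ₗ characterToHom R N

lemma dualSection_tmul (E : CharacterModule (CharacterModule R ⊗[R] A)) (ψ : CharacterModule N)
    (n : N) (a : A) : dualSection N E ψ (n ⊗ₜ a) = E (characterToHom R N ψ n ⊗ₜ a) :=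
  rfl

lemma dualSection_comp_dual (E : CharacterModule (CharacterModule R ⊗[R] A)) (g : N →ₗ[R] N') :
    dualSection N E ∘ₗ dual g = dual (g.rTensor A) ∘ₗ dualSection N' E := by
  refine LinearMap.ext fun ψ ↦ characterModule_tensor_ext fun n a ↦ ?_
  rw [LinearMap.comp_apply, dualSection_tmul, characterToHom_dual]
  rfl

end NaturalSection

section Splitting

open CharacterModule

variable {B A : Type u} [CommRing B] [CommRing A] [Algebra B A]

lemma exists_character_tmul_one (h : Function.Injective (unitMap B A (CharacterModule B))) :
    ∃ E : CharacterModule (CharacterModule B ⊗[B] A), ∀ χ, E (χ ⊗ₜ 1) = χ 1 := by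
  let evalOne : CharacterModule (CharacterModule B) :=
    (AddMonoidHom.eval (1 : B) : (B →+ AddCircle (1 : ℚ)) →+ AddCircle (1 : ℚ))
  obtain ⟨E, hE⟩ := dual_surjective_of_injective _ h evalOne
  exact ⟨E, DFunLike.congr_fun hE⟩

variable {E : CharacterModule (CharacterModule B ⊗[B] A)}

lemma dual_unitMap_comp_dualSection (hE : ∀ χ, E (χ ⊗ₜ 1) = χ 1) (N : Type u) [AddCommGroup N]
    [Module B N] : dual (unitMap B A N) ∘ₗ dualSection N E = LinearMap.id := by
  ext ψ n
  change dualSection N E ψ (n ⊗ₜ 1) = ψ n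
  rw [dualSection_tmul, hE, characterToHom_apply, one_smul]

variable {M : Type u} [AddCommGroup M] [Module B M] {ρ : M →ₗ[B] M ⊗[B] A}

lemma dual_comp_dualSection_comp_dual (hE : ∀ χ, E (χ ⊗ₜ 1) = χ 1)
    (hρ : ρ.rTensor A ∘ₗ ρ = (unitMap B A M).rTensor A ∘ₗ ρ) :
    dual (unitMap B A M - ρ) ∘ₗ dualSection M E ∘ₗ dual (unitMap B A M - ρ) =
      dual (unitMap B A M - ρ) := by
  have hcoassoc : dual ρ ∘ₗ dualSection M E ∘ₗ dual ρ =
      dual ρ ∘ₗ dualSection M E ∘ₗ dual (unitMap B A M) := by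
    rw [dualSection_comp_dual, dualSection_comp_dual, ← LinearMap.comp_assoc,
      ← LinearMap.comp_assoc, ← dual_comp, ← dual_comp, hρ]
  calc dual (unitMap B A M - ρ) ∘ₗ dualSection M E ∘ₗ dual (unitMap B A M - ρ)
      = (dual (unitMap B A M) ∘ₗ dualSection M E) ∘ₗ dual (unitMap B A M - ρ) -
          (dual ρ ∘ₗ dualSection M E ∘ₗ dual (unitMap B A M) -
            dual ρ ∘ₗ dualSection M E ∘ₗ dual ρ) := by
        simp only [dual_sub, LinearMap.sub_comp, LinearMap.comp_sub, LinearMap.comp_assoc]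
        abel
    _ = dual (unitMap B A M - ρ) := by
        rw [dual_unitMap_comp_dualSection hE, hcoassoc, sub_self, sub_zero, LinearMap.id_comp]

end Splitting

section Comodule

variable {B A M : Type u} [CommRing B] [CommRing A] [Algebra B A] [AddCommGroup M] [Module B M]
  [Module A M] [IsScalarTower B A M] {ρ : M →ₗ[B] M ⊗[B] A}

variable (ρ) in
lemma exact_coinv_subtype :
    Function.Exact (coinv B A M ρ).subtype (unitMap B A M - ρ) := fun m ↦ by
  rw [LinearMap.sub_apply, sub_eq_zero, eq_comm, Submodule.coe_subtype, Subtype.range_coe]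
  rfl

lemma comp_counitMap
    (hρ : ∀ (a : A) (m : M), ρ (a • m) = LinearMap.lTensor M (LinearMap.mulLeft B a) (ρ m)) :
    ρ ∘ₗ counitMap B A M ρ = (coinv B A M ρ).subtype.rTensor A := by
  refine TensorProduct.ext' fun c a ↦ ?_
  have hc : ρ c = (c : M) ⊗ₜ[B] 1 := c.2
  calc ρ (a • (c : M)) = (c : M) ⊗ₜ (a * 1) := by rw [hρ, hc]; rfl
    _ = (c : M) ⊗ₜ a := by rw [mul_one]

theorem counit_bijective_of_pure_general
    (hpure : Function.Injective (unitMap B A (CharacterModule B))) (hρ : IsCanComodule B A M ρ) :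
    Function.Bijective (counitMap B A M ρ) := by
  obtain ⟨hlin, hcoassoc, hcounit⟩ := hρ
  obtain ⟨E, hE⟩ := exists_character_tmul_one hpure
  obtain ⟨hinj, hexact⟩ := rTensor_injective_and_exact_of_dual_comp_comp_eq A
    (coinv B A M ρ).injective_subtype (exact_coinv_subtype ρ)
    (dual_comp_dualSection_comp_dual hE (LinearMap.ext hcoassoc))
  have hρζ := LinearMap.congr_fun (comp_counitMap hlin)
  have hρ_inj : Function.Injective ρ := Function.LeftInverse.injective hcounit
  refine ⟨.of_comp (f := ρ) ?_, fun m ↦ ?_⟩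
  · rwa [← LinearMap.coe_comp, comp_counitMap hlin]
  · have hker : (unitMap B A M - ρ).rTensor A (ρ m) = 0 := by
      rw [LinearMap.rTensor_sub, LinearMap.sub_apply, hcoassoc, sub_self]
    obtain ⟨x, hx⟩ := (hexact _).1 hker
    exact ⟨x, hρ_inj ((hρζ x).trans hx)⟩

end Comodule

/-- If `f : B → A` is pure as a morphism of `B`-modules, then for every comodule `(M, ρ)`
over the canonical coring `A ⊗_B A` the counit map `ζ_M : M^co ⊗_B A → M` is bijective. -/
theorem counit_bijective_of_pure
    (B A : Type u) [CommRing B] [CommRing A] [Algebra B A]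
    (hpure : ∀ (N : Type u) [AddCommGroup N] [Module B N],
      Function.Injective (unitMap B A N))
    (M : Type u) [AddCommGroup M] [Module B M] [Module A M] [IsScalarTower B A M]
    (ρ : M →ₗ[B] M ⊗[B] A) (hρ : IsCanComodule B A M ρ) :
    Function.Bijective (counitMap B A M ρ) :=
  counit_bijective_of_pure_general (hpure _) hρ
end
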